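/- arXiv:2302.13478 — 2 statements merged into one kernel-verified Lean document; each statement's English description precedes it below -/
import Mathlib

section
/- For each i ∈ {0,1,2}: the polynomial f_i(X) has three distinct roots in F_q if ω^i·c is a cube in F_{q²}, and f_i(X) is irreducible in F_q[X] otherwise. -/
open Polynomial

theorem aux_fixed {K L : Type*} [Field K] [Fintype K] [Field L] [Algebra K L] (x : L)
    (hx : x ^ Fintype.card K = x) : ∃ k : K, algebraMap K L k = x := by
  classical
  by_contra hne
  push Not at hne
  have h1 : 1 < Fintype.card K := Fintype.one_lt_card
  have hp0 : (X ^ Fintype.card K - X : L[X]) ≠ 0 := FiniteField.X_pow_card_sub_X_ne_zero L h1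
  have := card_le_degree_of_subset_roots (p := (X ^ Fintype.card K - X : L[X]))
    (Z := insert x (Finset.univ.image (algebraMap K L))) (by
      intro y hy
      rw [mem_roots hp0]
      simp only [Finset.mem_val, Finset.mem_insert, Finset.mem_image, Finset.mem_univ,
        true_and] at hy
      rcases hy with rfl | ⟨k, rfl⟩
      · simp [hx]
      · simp [← map_pow, FiniteField.pow_card])
  rw [FiniteField.X_pow_card_sub_X_natDegree_eq L h1, Finset.card_insert_of_notMem (by simpa using hne),
    Finset.card_image_of_injective _ (algebraMap K L).injective, Finset.card_univ] at this
  omega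

theorem aux_key {K L : Type*} [Field K] [Field L] [Algebra K L] (h2 : (2 : L) = 0)
    (σ : L →+* L) (hK : ∀ x, σ x = x → ∃ k : K, algebraMap K L k = x)
    (hK' : ∀ k : K, σ (algebraMap K L k) = algebraMap K L k)
    (ω c d e A : L) (hω : ω ^ 2 + ω + 1 = 0) (hcd : c * d = 1) (hne : c ≠ d)
    (he : e ≠ 0) (he1 : e ^ 2 ≠ 1) (hA : A ≠ 0)
    (f : K[X]) (hdeg : f.natDegree = 3)
    (hf : ∀ x : K, algebraMap K L (f.eval x) =
      A * ((algebraMap K L x + c) ^ 3 + e ^ 2 * (algebraMap K L x + d) ^ 3))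
    (h : (σ ω = ω ∧ σ c = c ∧ σ e = e) ∨ (σ ω = ω ^ 2 ∧ σ c = d ∧ e * σ e = 1)) :
    ((∃ y : L, σ (σ y) = y ∧ y ^ 3 = e) → {x : K | f.eval x = 0}.ncard = 3) ∧
    (¬ (∃ y : L, σ (σ y) = y ∧ y ^ 3 = e) → Irreducible f) := by
  have hω1 : ω ≠ 1 := by rintro rfl; apply one_ne_zero (α := L); linear_combination hω - h2
  have hω3 : ω ^ 3 = 1 := by linear_combination (ω - 1) * hω
  have hω0 : ω ≠ 0 := by rintro rfl; simp at hω
  have hc0 : c ≠ 0 := left_ne_zero_of_mul_eq_one hcd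
  have hd0 : d ≠ 0 := right_ne_zero_of_mul_eq_one hcd
  have hσd (hc : σ c = c) : σ d = d := by
    have := congrArg σ hcd
    rw [map_mul, hc, map_one, ← hcd] at this
    exact mul_left_cancel₀ hc0 this
  have hσd' (hc : σ c = d) : σ d = c := by
    have := congrArg σ hcd
    rw [map_mul, hc, map_one, ← hcd, mul_comm c] at this
    exact mul_left_cancel₀ hd0 this
  constructor
  · rintro ⟨y, hyy, hy⟩
    have hy0 : y ≠ 0 := by rintro rfl; apply he; rw [← hy]; simp
    have hA' : (σ ω = ω ∧ σ c = c ∧ σ y = y) ∨ (σ ω = ω ^ 2 ∧ σ c = d ∧ y * σ y = 1) := by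
      rcases h with ⟨h1, h3, h4⟩ | ⟨h1, h3, h4⟩
      · left
        refine ⟨h1, h3, ?_⟩
        rw [← hy, map_pow] at h4
        have : (σ y - y) * ((σ y - ω * y) * (σ y - ω ^ 2 * y)) = 0 := by
          linear_combination h4 + (y^2 * σ y *ω - y * (σ y)^2) * hω - y ^ 3 * hω3 + 0 * hyy
        rcases mul_eq_zero.1 this with h5 | h5
        · exact sub_eq_zero.1 h5
        exfalso
        apply hω1
        rcases mul_eq_zero.1 h5 with h5 | h5
        · have h6 := sub_eq_zero.1 h5
          have h7 := congrArg σ h6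
          rw [hyy, map_mul, h1, h6] at h7
          apply mul_left_cancel₀ hy0
          linear_combination ω * h7 + y * hω3
        · have h6 := sub_eq_zero.1 h5
          have h7 := congrArg σ h6
          rw [hyy, map_mul, map_pow, h1, h6] at h7
          apply mul_left_cancel₀ hy0
          linear_combination - h7 - ω * y * hω3
      · right
        refine ⟨h1, h3, ?_⟩
        rw [← hy, map_pow, ← mul_pow] at h4
        have hs : σ (y * σ y) = y * σ y := by rw [map_mul, hyy, mul_comm]
        set t := y * σ y
        have : (t - 1) * ((t - ω) * (t - ω ^ 2)) = 0 := by
          linear_combination h4 + (t * ω - t ^ 2) * hω - hω3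
        rcases mul_eq_zero.1 this with h5 | h5
        · exact sub_eq_zero.1 h5
        exfalso
        apply hω1
        rcases mul_eq_zero.1 h5 with h5 | h5
        · rw [sub_eq_zero.1 h5, h1] at hs
          apply mul_left_cancel₀ hω0
          linear_combination hs
        · rw [sub_eq_zero.1 h5, map_pow, h1] at hs
          apply mul_left_cancel₀ hω0
          linear_combination - hs + ω * hω3
    have hB : ∀ z : L, z ^ 3 = e ^ 2 → ((σ c = c ∧ σ z = z) ∨ (σ c = d ∧ z * σ z = 1)) →
        ∃ k : K, f.eval k = 0 ∧ algebraMap K L k * (1 + z) = c + z * d := by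
      intro z hz hz'
      have hz1 : 1 + z ≠ 0 := by
        intro h0
        have : z = 1 := by linear_combination h0 - h2
        apply he1
        rw [← hz, this, one_pow]
      obtain ⟨k, hk⟩ := hK ((c + z * d) / (1 + z)) (by
        rcases hz' with ⟨h1, h3⟩ | ⟨h1, h3⟩
        · simp [h1, h3, hσd h1]
        · have hz0 : z ≠ 0 := left_ne_zero_of_mul_eq_one h3
          have h4 : σ z = z⁻¹ := (inv_eq_of_mul_eq_one_right h3).symm
          have h5 : 1 + z⁻¹ ≠ 0 := by
            intro h6
            apply hz1
            field_simp at h6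
            linear_combination h6
          simp only [map_div₀, map_add, map_mul, map_one, h1, h4, hσd' h1]
          rw [div_eq_div_iff h5 hz1]
          field_simp
          ring)
      have hk' : algebraMap K L k * (1 + z) = c + z * d := by
        rw [hk]; field_simp
      refine ⟨k, ?_, hk'⟩
      apply (algebraMap K L).injective
      rw [hf, map_zero, ← hz]
      generalize algebraMap K L k = x at hk'
      have h6 : x + c = - (z * (x + d)) := by
        linear_combination hk' + (c + z * d) * h2
      rw [h6]
      ring
    obtain ⟨k0, hk0, hz0⟩ := hB (y ^ 2) (by rw [← hy]; ring) (by
      rcases hA' with ⟨h1, h3, h4⟩ | ⟨h1, h3, h4⟩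
      · left; simp [h3, h4]
      · right; refine ⟨h3, ?_⟩
        rw [map_pow, ← mul_pow, h4, one_pow])
    obtain ⟨k1, hk1, hz1⟩ := hB (ω * y ^ 2) (by rw [← hy]; linear_combination y ^ 6 * hω3) (by
      rcases hA' with ⟨h1, h3, h4⟩ | ⟨h1, h3, h4⟩
      · left; simp [h1, h3, h4]
      · right; refine ⟨h3, ?_⟩
        rw [map_mul, map_pow, h1]
        linear_combination (y * σ y + 1) * h4 + (y * σ y) ^ 2 * hω3)
    obtain ⟨k2, hk2, hz2⟩ := hB (ω ^ 2 * y ^ 2)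
      (by rw [← hy]; linear_combination y ^ 6 * (ω ^ 3 + 1) * hω3) (by
      rcases hA' with ⟨h1, h3, h4⟩ | ⟨h1, h3, h4⟩
      · left; simp [h1, h3, h4]
      · right; refine ⟨h3, ?_⟩
        rw [map_mul, map_pow, map_pow, h1]
        linear_combination (y * σ y + 1) * h4 + (y * σ y) ^ 2 * (ω ^ 3 + 1) * hω3)
    have hinj : ∀ (k : K) (z z' : L), algebraMap K L k * (1 + z) = c + z * d →
        algebraMap K L k * (1 + z') = c + z' * d → z = z' := by
      intro k z z' h1 h3
      have : (z - z') * (algebraMap K L k - d) = 0 := by linear_combination h1 - h3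
      rcases mul_eq_zero.1 this with h5 | h5
      · exact sub_eq_zero.1 h5
      · rw [sub_eq_zero.1 h5] at h1
        exact absurd (by linear_combination -h1) hne
    have hy2 : y ^ 2 ≠ 0 := pow_ne_zero _ hy0
    have h01 : k0 ≠ k1 := by
      rintro rfl
      apply hω1
      apply mul_right_cancel₀ hy2
      rw [← hinj _ _ _ hz0 hz1, one_mul]
    have h02 : k0 ≠ k2 := by
      rintro rfl
      apply hω1
      have := hinj _ _ _ hz0 hz2
      apply mul_right_cancel₀ hy2
      linear_combination ω * this + y ^ 2 * hω3
    have h12 : k1 ≠ k2 := by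
      rintro rfl
      apply hω1
      have := hinj _ _ _ hz1 hz2
      apply mul_right_cancel₀ hy2
      apply mul_left_cancel₀ hω0
      linear_combination - this
    have hf0 : f ≠ 0 := by rintro rfl; simp at hdeg
    classical
    have hset : {x : K | f.eval x = 0} = ↑f.roots.toFinset := by
      ext x; simp [hf0]
    rw [hset, Set.ncard_coe_finset]
    apply le_antisymm
    · rw [← hdeg]; exact (Multiset.toFinset_card_le _).trans (card_roots' f)
    · have : ({k0, k1, k2} : Finset K) ⊆ f.roots.toFinset := by
        intro x hx
        simp only [Finset.mem_insert, Finset.mem_singleton] at hx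
        rcases hx with rfl | rfl | rfl <;> simp [*]
      refine le_trans ?_ (Finset.card_le_card this)
      rw [Finset.card_eq_three.2 ⟨k0, k1, k2, h01, h02, h12, rfl⟩]
  · intro hno
    rw [irreducible_iff_roots_eq_zero_of_degree_le_three (by omega) (by omega)]
    apply Multiset.eq_zero_of_forall_notMem
    intro k hk
    apply hno
    have hroot : f.eval k = 0 := by simpa using (mem_roots'.1 hk).2
    have h1 := hf k
    have hσx := hK' k
    rw [hroot, map_zero] at h1
    generalize algebraMap K L k = x at h1 hσx
    have h3 := (mul_eq_zero.1 h1.symm).resolve_left hA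
    have hxd : x + d ≠ 0 := by
      intro h4
      rw [h4] at h3
      have h5 : x + c = 0 := by simpa using h3
      apply hne
      linear_combination h5 - h4
    have hxc : x + c ≠ 0 := by
      intro h4
      rw [h4] at h3
      have h5 : x + d = 0 := by simpa [he] using h3
      exact hxd h5
    have h4 : (x + c) ^ 3 = e ^ 2 * (x + d) ^ 3 := by
      linear_combination h3 - e ^ 2 * (x + d) ^ 3 * h2
    have hee : σ (σ e) = e := by
      rcases h with ⟨_, _, h6⟩ | ⟨_, _, h6⟩
      · rw [h6, h6]
      · have := congrArg σ h6
        rw [map_mul, map_one, ← h6, mul_comm] at this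
        refine mul_right_cancel₀ (right_ne_zero_of_mul_eq_one h6) this
    have hcc : σ (σ c) = c ∧ σ (σ d) = d := by
      rcases h with ⟨_, h6, _⟩ | ⟨_, h6, _⟩
      · rw [h6, h6, hσd h6, hσd h6]; simp
      · rw [h6, hσd' h6, h6]; simp
    refine ⟨e * (x + d) / (x + c), ?_, ?_⟩
    · simp [hσx, hee, hcc]
    · rw [div_pow, div_eq_iff (pow_ne_zero _ hxc), h4]
      ring

/-- Lemma 5.1: for each `i ∈ {0,1,2}`, the polynomial `f_i` has three distinct roots in
`F_q` if `ω^i·c` is a cube in `F_{q²}`, and is irreducible over `F_q` otherwise. -/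
theorem fi_roots_or_irreducible
    (m : ℕ) (hm : 0 < m) (q : ℕ) (hq : q = 2 ^ m)
    (a b : GaloisField 2 m)
    (ha2 : a ^ 2 ≠ a)
    (htr : ∑ i ∈ Finset.range m, a⁻¹ ^ 2 ^ i = (m : GaloisField 2 m))
    (hb : b ^ 2 + b = a⁻¹ + 1)
    (ω : AlgebraicClosure (GaloisField 2 m)) (hω4 : ω ^ 4 = ω) (hω2 : ω ^ 2 ≠ ω)
    (c : AlgebraicClosure (GaloisField 2 m))
    (hc : c = (algebraMap (GaloisField 2 m) (AlgebraicClosure (GaloisField 2 m)) b + ω) /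
      (algebraMap (GaloisField 2 m) (AlgebraicClosure (GaloisField 2 m)) b + ω ^ 2))
    (f0 f1 f2 : Polynomial (GaloisField 2 m))
    (hf0 : f0 = X ^ 3 + X + C a)
    (hf1 : f1 = C (a * b ^ 2) * X ^ 3 + X ^ 2 + C (a * (b + 1) ^ 2) * X +
      C (a ^ 2 * b ^ 4))
    (hf2 : f2 = C (a * (b + 1) ^ 2) * X ^ 3 + X ^ 2 + C (a * b ^ 2) * X +
      C (a ^ 2 * (b + 1) ^ 4)) :
    ((∃ y : AlgebraicClosure (GaloisField 2 m), y ^ q ^ 2 = y ∧ y ^ 3 = c) →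
      {x : GaloisField 2 m | Polynomial.eval x f0 = 0}.ncard = 3) ∧
    (¬ (∃ y : AlgebraicClosure (GaloisField 2 m), y ^ q ^ 2 = y ∧ y ^ 3 = c) →
      Irreducible f0) ∧
    ((∃ y : AlgebraicClosure (GaloisField 2 m), y ^ q ^ 2 = y ∧ y ^ 3 = ω * c) →
      {x : GaloisField 2 m | Polynomial.eval x f1 = 0}.ncard = 3) ∧
    (¬ (∃ y : AlgebraicClosure (GaloisField 2 m), y ^ q ^ 2 = y ∧ y ^ 3 = ω * c) →
      Irreducible f1) ∧
    ((∃ y : AlgebraicClosure (GaloisField 2 m), y ^ q ^ 2 = y ∧ y ^ 3 = ω ^ 2 * c) →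
      {x : GaloisField 2 m | Polynomial.eval x f2 = 0}.ncard = 3) ∧
    (¬ (∃ y : AlgebraicClosure (GaloisField 2 m), y ^ q ^ 2 = y ∧ y ^ 3 = ω ^ 2 * c) →
      Irreducible f2) := by
  classical
  have : Fintype (GaloisField 2 m) := Fintype.ofFinite _
  have hcard : Fintype.card (GaloisField 2 m) = q := by
    rw [← Nat.card_eq_fintype_card, GaloisField.card 2 m hm.ne', hq]
  have : CharP (AlgebraicClosure (GaloisField 2 m)) 2 :=
    charP_of_injective_algebraMap (algebraMap (GaloisField 2 m) _).injective 2
  have h2 : (2 : AlgebraicClosure (GaloisField 2 m)) = 0 := CharTwo.two_eq_zero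
  have h2K : (2 : GaloisField 2 m) = 0 := CharTwo.two_eq_zero
  have ha0 : a ≠ 0 := by rintro rfl; simp at ha2
  have ha1 : a ≠ 1 := by rintro rfl; simp at ha2
  have hab : a * (b ^ 2 + b + 1) = 1 := by
    rw [hb]; field_simp; linear_combination a * h2K
  have hb0 : b ≠ 0 := by
    rintro rfl; apply ha1; linear_combination hab
  have hb1 : b + 1 ≠ 0 := by
    intro h0; apply ha1; linear_combination hab - a * b * h0
  have hω0 : ω ≠ 0 := by rintro rfl; simp at hω2
  have hω1 : ω ≠ 1 := by rintro rfl; simp at hω2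
  have hω : ω ^ 2 + ω + 1 = 0 := by
    have : ω * ((ω - 1) * (ω ^ 2 + ω + 1)) = 0 := by linear_combination hω4
    simpa [hω0, sub_eq_zero, hω1] using this
  have hω3 : ω ^ 3 = 1 := by linear_combination (ω - 1) * hω
  let σ : AlgebraicClosure (GaloisField 2 m) →+* AlgebraicClosure (GaloisField 2 m) :=
    iterateFrobenius _ 2 m
  have hσ : ∀ x, σ x = x ^ q := by intro x; rw [hq]; exact iterateFrobenius_def 2 m x
  have hσσ : ∀ x, x ^ q ^ 2 = σ (σ x) := by
    intro x; rw [hσ, hσ, ← pow_mul, sq]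
  have hK : ∀ x, σ x = x → ∃ k : GaloisField 2 m, algebraMap _ _ k = x := by
    intro x hx; apply aux_fixed; rw [hcard, ← hσ, hx]
  have hK' : ∀ k : GaloisField 2 m, σ (algebraMap _ _ k) = algebraMap _ _ k := by
    intro k; rw [hσ, ← map_pow, ← hcard, FiniteField.pow_card]
  have hσω : σ ω = ω ∨ σ ω = ω ^ 2 := by
    have key : ∀ n : ℕ, ω ^ 2 ^ n = ω ∨ ω ^ 2 ^ n = ω ^ 2 := by
      intro n
      induction n with
      | zero => left; simp
      | succ n ih =>
        rw [pow_succ, pow_mul]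
        rcases ih with h | h <;> rw [h]
        · right; rfl
        · left; rw [← pow_mul]; exact hω4
    rw [hσ, hq]
    exact key m
  have hσa := hK' a
  have hσb := hK' b
  set F := algebraMap (GaloisField 2 m) (AlgebraicClosure (GaloisField 2 m)) with hF
  have hαβ : F a * (F b ^ 2 + F b + 1) = 1 := by
    have := congrArg F hab
    simpa using this
  have hα0 : F a ≠ 0 := by simpa using ha0
  have hβ0 : F b ≠ 0 := by simpa using hb0
  have hβ1 : F b + 1 ≠ 0 := fun h => hb1 (F.injective (by rw [map_add, map_one, h, map_zero]))
  have hprod : F a * ((F b + ω) * (F b + ω ^ 2)) = 1 := by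
    linear_combination hαβ + F a * F b * hω - F a * F b * h2 + F a * hω3 + 0 * h2
  have hw1 : F b + ω ≠ 0 := by
    intro h0; rw [h0] at hprod; simp at hprod
  have hw2 : F b + ω ^ 2 ≠ 0 := by
    intro h0; rw [h0] at hprod; simp at hprod
  have hc' : c = F a * (F b + ω) ^ 2 := by
    rw [hc, div_eq_iff hw2]; linear_combination -(F b + ω) * hprod
  obtain ⟨d, hd⟩ : ∃ d, d = F a * (F b + ω ^ 2) ^ 2 := ⟨_, rfl⟩
  have hcd : c * d = 1 := by
    rw [hc', hd]; linear_combination (F a * ((F b + ω) * (F b + ω ^ 2)) + 1) * hprod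
  have hcda : c + d = F a := by
    rw [hc', hd]
    grind
  have hne : c ≠ d := by
    rintro rfl; apply hα0; rw [← hcda]; linear_combination c * h2
  have hc0 : c ≠ 0 := left_ne_zero_of_mul_eq_one hcd
  have hd0 : d ≠ 0 := right_ne_zero_of_mul_eq_one hcd
  have hσc : (σ ω = ω ∧ σ c = c) ∨ (σ ω = ω ^ 2 ∧ σ c = d) := by
    rcases hσω with h | h
    · left; refine ⟨h, ?_⟩; rw [hc']; simp [h, hσa, hσb]
    · right; refine ⟨h, ?_⟩; rw [hc', hd]; simp [h, hσa, hσb]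
  have hdeg : ∀ u v w t : GaloisField 2 m, u ≠ 0 →
      (C u * X ^ 3 + C v * X ^ 2 + C w * X + C t).natDegree = 3 := by
    intro u v w t hu; exact natDegree_cubic hu
  simp only [hσσ]
  obtain ⟨P0, N0⟩ := aux_key h2 σ hK hK' ω c d c ((F b + ω ^ 2) ^ 2) hω hcd hne hc0
    (by
      intro h
      apply hne
      apply mul_left_cancel₀ hc0
      linear_combination h - hcd) (pow_ne_zero _ hw2) f0
    (by
      rw [← hdeg 1 0 1 a one_ne_zero, hf0]
      simp)
    (by
      intro x
      rw [hf0]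
      simp only [eval_add, eval_pow, eval_X, eval_C, map_add, map_pow]
      apply mul_left_cancel₀ hα0
      have hB : F a * (F b + ω ^ 2) ^ 2 = d := hd.symm
      rw [← mul_assoc, hB, ← hcda]
      clear hc hc' hd
      grind)
    (by
      rcases hσc with ⟨h1, h3⟩ | ⟨h1, h3⟩
      · left; exact ⟨h1, h3, h3⟩
      · right; refine ⟨h1, h3, ?_⟩; rw [h3, hcd])
  have e1 : ω ^ 2 * d + ω * c = F a * F b ^ 2 := by
    rw [hc', hd]
    grind
  have e2 : ω ^ 2 * c + ω * d = F a * (F b + 1) ^ 2 := by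
    rw [hc', hd]
    grind
  obtain ⟨P1, N1⟩ := aux_key h2 σ hK hK' ω c d (ω * c) (ω ^ 2 * d) hω hcd hne
    (mul_ne_zero hω0 hc0)
    (by
      intro h
      apply mul_ne_zero hα0 (pow_ne_zero 2 hβ0)
      rw [← e1]
      clear hc hc' hd
      grind) (mul_ne_zero (pow_ne_zero _ hω0) hd0) f1
    (by
      rw [← hdeg (a * b ^ 2) 1 (a * (b + 1) ^ 2) (a ^ 2 * b ^ 4)
        (mul_ne_zero ha0 (pow_ne_zero 2 hb0)), hf1]
      simp)
    (by
      intro x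
      rw [hf1]
      simp only [eval_add, eval_mul, eval_pow, eval_X, eval_C, eval_one, map_add, map_mul, map_pow, map_one]
      have e3 : F a ^ 2 * F b ^ 4 = (ω ^ 2 * d + ω * c) ^ 2 := by rw [e1]; ring
      rw [e3, ← e1, ← e2]
      grind)
    (by
      rcases hσc with ⟨h1, h3⟩ | ⟨h1, h3⟩
      · left; refine ⟨h1, h3, ?_⟩; rw [map_mul, h1, h3]
      · right; refine ⟨h1, h3, ?_⟩
        rw [map_mul, h1, h3]
        linear_combination ω ^ 3 * hcd + hω3)
  obtain ⟨P2, N2⟩ := aux_key h2 σ hK hK' ω c d (ω ^ 2 * c) (ω * d) hω hcd hne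
    (mul_ne_zero (pow_ne_zero 2 hω0) hc0)
    (by
      intro h
      apply mul_ne_zero hα0 (pow_ne_zero 2 hβ1)
      rw [← e2]
      clear hc hc' hd
      grind) (mul_ne_zero hω0 hd0) f2
    (by
      rw [← hdeg (a * (b + 1) ^ 2) 1 (a * b ^ 2) (a ^ 2 * (b + 1) ^ 4)
        (mul_ne_zero ha0 (pow_ne_zero 2 hb1)), hf2]
      simp)
    (by
      intro x
      rw [hf2]
      simp only [eval_add, eval_mul, eval_pow, eval_X, eval_C, eval_one, map_add, map_mul, map_pow, map_one]
      have e3 : F a ^ 2 * (F b + 1) ^ 4 = (ω ^ 2 * c + ω * d) ^ 2 := by rw [e2]; ring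
      rw [e3, ← e1, ← e2]
      grind)
    (by
      rcases hσc with ⟨h1, h3⟩ | ⟨h1, h3⟩
      · left; refine ⟨h1, h3, ?_⟩; rw [map_mul, map_pow, h1, h3]
      · right; refine ⟨h1, h3, ?_⟩
        rw [map_mul, map_pow, h1, h3]
        linear_combination ω ^ 6 * hcd + (ω ^ 3 + 1) * hω3)
  exact ⟨P0, N0, P1, N1, P2, N2⟩
end

section
/- The element c is a cube in F_{q²} if and only if D_n(a) = 0, where n := ⌊(q+1)/3⌋. -/
open Polynomial

local notation "K" => AlgebraicClosure (ZMod 2)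

theorem aux_omega (ω : K) (h : ω ^ 4 = ω) (k : ℕ) : ω ^ 2 ^ (2 * k) = ω := by
  induction k with
  | zero => simp
  | succ k ih =>
    rw [show 2 ^ (2 * (k + 1)) = 2 ^ (2 * k) * 4 by ring, pow_mul, ih, h]

theorem aux_cube (c : K) (hc0 : c ≠ 0) (q n s : ℕ) (hs : q ^ 2 = 3 * (n * s) + 1)
    (h3 : c ^ (3 * n) = 1) (hmod : s % 3 ≠ 0) :
    (∃ y : K, y ^ q ^ 2 = y ∧ y ^ 3 = c) ↔ c ^ n = 1 := by
  have h3' : (c ^ n) ^ 3 = 1 := by rw [← pow_mul, mul_comm, h3]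
  have key : (c ^ n) ^ s = 1 ↔ c ^ n = 1 := by
    constructor
    · intro h
      have h1 : orderOf (c ^ n) ∣ Nat.gcd s 3 :=
        Nat.dvd_gcd (orderOf_dvd_of_pow_eq_one h) (orderOf_dvd_of_pow_eq_one h3')
      have h2 : Nat.gcd s 3 = 1 := by
        have : Nat.Coprime 3 s := (Nat.Prime.coprime_iff_not_dvd Nat.prime_three).2 (by omega)
        exact this.symm
      rw [h2, Nat.dvd_one] at h1
      exact orderOf_eq_one_iff.1 h1
    · intro h
      rw [h, one_pow]
  rw [← key, ← pow_mul]
  constructor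
  · rintro ⟨y, hy, rfl⟩
    have hy0 : y ≠ 0 := by
      rintro rfl
      simp at hc0
    rw [hs, pow_succ, pow_mul] at hy
    exact mul_right_cancel₀ hy0 (by rw [hy, one_mul])
  · intro h
    obtain ⟨y, hy⟩ := IsAlgClosed.exists_pow_nat_eq c (n := 3) (by norm_num)
    refine ⟨y, ?_, hy⟩
    rw [hs, pow_succ, pow_mul, hy, h, one_mul]

/-- Lemma 5.3: `c = (b+ω)/(b+ω²)` is a cube in `F_{q²}` if and only if `D_n(a) = 0`,
where `n = ⌊(q+1)/3⌋`. -/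
theorem cube_iff_dickson
    (m : ℕ) (hm : 0 < m) (q : ℕ) (hq : q = 2 ^ m)
    (n : ℕ) (hn : n = (q + 1) / 3)
    (a : K) (haq : a ^ q = a) (ha2 : a ^ 2 ≠ a)
    (htr : ∑ i ∈ Finset.range m, a⁻¹ ^ 2 ^ i = (m : K))
    (b : K) (hbq : b ^ q = b) (hb : b ^ 2 + b = a⁻¹ + 1)
    (ω : K) (hω4 : ω ^ 4 = ω) (hω2 : ω ^ 2 ≠ ω)
    (c : K) (hc : c = (b + ω) / (b + ω ^ 2)) :
    (∃ y : K, y ^ q ^ 2 = y ∧ y ^ 3 = c) ↔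
      Polynomial.eval a (Polynomial.dickson 1 (1 : K) n) = 0 := by
  have : CharP K 2 := inferInstance
  have two : (2 : K) = 0 := CharP.cast_eq_zero K 2
  have ha0 : a ≠ 0 := by
    rintro rfl
    simp at ha2
  have hw : ω ^ 2 + ω + 1 = 0 := by
    have h : (ω ^ 2 - ω) * (ω ^ 2 + ω + 1) = 0 := by linear_combination hω4
    exact (mul_eq_zero.1 h).resolve_left (sub_ne_zero.2 hω2)
  have hprod : (b + ω) * (b + ω ^ 2) = a⁻¹ := by
    linear_combination hb + (b + ω - 1) * hw + (1 - b) * two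
  have hai : a⁻¹ ≠ 0 := inv_ne_zero ha0
  have h1 : b + ω ≠ 0 := by
    intro h
    rw [h, zero_mul] at hprod
    exact hai hprod.symm
  have h2 : b + ω ^ 2 ≠ 0 := by
    intro h
    rw [h, mul_zero] at hprod
    exact hai hprod.symm
  have hc0 : c ≠ 0 := by rw [hc]; exact div_ne_zero h1 h2
  have hac : a = c + c⁻¹ := by
    have : a = ((b + ω) * (b + ω ^ 2))⁻¹ := by rw [hprod, inv_inv]
    rw [this, hc, inv_div]
    field_simp
    have e : ω ^ 2 = ω + 1 := by linear_combination hw - (ω + 1) * two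
    rw [e]
    linear_combination (-(b ^ 2 + ω ^ 2 + 2 * b * ω + b + ω)) * two
  have hD : Polynomial.eval a (Polynomial.dickson 1 (1 : K) n) = 0 ↔ c ^ n = 1 := by
    rw [hac, Polynomial.dickson_one_one_eval_add_inv _ _ (mul_inv_cancel₀ hc0)]
    have hcn : c ^ n ≠ 0 := pow_ne_zero _ hc0
    rw [inv_pow]
    constructor
    · intro h
      have h' : (c ^ n - 1) ^ 2 = 0 := by
        have : c ^ n * (c ^ n + (c ^ n)⁻¹) = 0 := by rw [h, mul_zero]
        rw [mul_add, mul_inv_cancel₀ hcn] at this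
        linear_combination this - c ^ n * two
      exact sub_eq_zero.1 (pow_eq_zero_iff (two_ne_zero)|>.1 h')
    · intro h
      rw [h, inv_one, ← two]; norm_num
  rw [hD]
  have hcq : c ^ q = (b + ω ^ q) / (b + (ω ^ q) ^ 2) := by
    rw [hc, div_pow]
    have f : ∀ x y : K, (x + y) ^ q = x ^ q + y ^ q := by
      intro x y
      rw [hq]
      exact add_pow_char_pow x y 2 m
    rw [f, f, hbq, ← pow_mul, ← pow_mul, mul_comm 2 q]
  rcases Nat.even_or_odd' m with ⟨k, hk | hk⟩
  · have hwq : ω ^ q = ω := by rw [hq, hk]; exact aux_omega ω hω4 k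
    have hq3 : q % 3 = 1 := by
      rw [hq, hk, pow_mul, Nat.pow_mod]; norm_num
    have hqn : q = 3 * n + 1 := by omega
    rw [hwq, ← hc] at hcq
    refine aux_cube c hc0 q n (3 * n + 2) ?_ ?_ (by omega)
    · rw [hqn]; ring
    · rw [hqn, pow_succ] at hcq
      exact mul_right_cancel₀ hc0 (by rw [hcq, one_mul])
  · have hwq : ω ^ q = ω ^ 2 := by
      rw [hq, hk, pow_succ, pow_mul, aux_omega ω hω4 k]
    have hq3 : q % 3 = 2 := by
      rw [hq, hk, pow_succ, pow_mul, Nat.mul_mod, Nat.pow_mod]; norm_num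
    obtain ⟨j, hj⟩ : ∃ j, q = 3 * j + 2 := ⟨q / 3, by omega⟩
    have hnj : n = j + 1 := by omega
    rw [hwq, ← pow_mul, show 2 * 2 = 4 by norm_num, hω4, ← inv_div, ← hc] at hcq
    refine aux_cube c hc0 q n (3 * j + 1) ?_ ?_ (by omega)
    · rw [hj, hnj]; ring
    · rw [show 3 * n = q + 1 by omega, pow_succ, hcq, inv_mul_cancel₀ hc0]
end
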